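/- arXiv:2502.14114 — 9 statements merged into one kernel-verified Lean document; each statement's English description precedes it below -/
import Mathlib

section
/- Let n, s, t be positive natural numbers with s ≥ n and t ≥ n. Let A be a real n × s matrix and B a real n × t matrix. Define the broadcast vectorized tensor product A ⊗̄ B as the real n × (s·t) matrix whose entry in row i and column (α, β) equals A i α · B i β. If no row of B is the zero vector and A has rank n (full row rank), then A ⊗̄ B has rank n. -/
/-- Broadcast vectorized tensor product: `(A ⊗̄ B) i (α, β) = A i α * B i β`. -/
def bvtp {n s t : ℕ} (A : Matrix (Fin n) (Fin s) ℝ) (B : Matrix (Fin n) (Fin t) ℝ) :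
    Matrix (Fin n) (Fin s × Fin t) ℝ :=
  Matrix.of fun i p => A i p.1 * B i p.2

theorem bvtp_full_rank {n s t : ℕ} (hn : 0 < n) (hs : n ≤ s) (ht : n ≤ t)
    (A : Matrix (Fin n) (Fin s) ℝ) (B : Matrix (Fin n) (Fin t) ℝ)
    (hB : ∀ i, B i ≠ 0) (hA : A.rank = n) :
    (bvtp A B).rank = n := by
  have hli : LinearIndependent ℝ A.row := by
    rw [linearIndependent_iff_card_eq_finrank_span, Set.finrank,
      ← A.rank_eq_finrank_span_row, hA, Fintype.card_fin]
  have key : LinearIndependent ℝ (bvtp A B).row := by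
    rw [Fintype.linearIndependent_iff] at hli ⊢
    intro g hg i
    obtain ⟨β, hβ⟩ := Function.ne_iff.mp (hB i)
    have h := hli (fun j => g j * B j β) (by
      ext α
      have h2 := congrFun hg (α, β)
      simp only [Finset.sum_apply, Pi.smul_apply, smul_eq_mul, Pi.zero_apply,
        Matrix.row, bvtp, Matrix.of_apply] at h2 ⊢
      rw [← h2]
      refine Finset.sum_congr rfl fun j _ => ?_
      ring) i
    exact (mul_eq_zero.mp h).resolve_right hβ
  rw [key.rank_matrix, Fintype.card_fin]
end

section
/- Let σ : ℝ^M → ℝ be a surjective continuously differentiable function, and let X be a real M × N matrix with rank N (so N ≤ M). Then for every y ∈ ℝ^N there exist a matrix W ∈ ℝ^{M×M} and a vector b ∈ ℝ^M such that σ(W X_i + b) = y_i for every i = 1, …, N, where X_i denotes the i-th column of X. That is, the fixed nonlinearity affine network on σ is solvable. -/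
open Matrix

theorem fixed_nonlinearity_affine_network_solvable {M N : ℕ}
    (σ : (Fin M → ℝ) → ℝ) (hσ : ContDiff ℝ 1 σ) (hsurj : Function.Surjective σ)
    (X : Matrix (Fin M) (Fin N) ℝ) (hrank : X.rank = N) :
    ∀ y : Fin N → ℝ, ∃ (W : Matrix (Fin M) (Fin M) ℝ) (b : Fin M → ℝ),
      ∀ i : Fin N, σ (W.mulVec (fun j => X j i) + b) = y i := by
  intro y
  choose z hz using fun i => hsurj (y i)
  have hli : LinearIndependent ℝ X.col := by
    rw [linearIndependent_iff_card_eq_finrank_span, Set.finrank,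
      ← Matrix.rank_eq_finrank_span_cols, hrank, Fintype.card_fin]
  obtain ⟨f, hf⟩ := LinearMap.exists_extend ((Module.Basis.span hli).constr ℝ z)
  refine ⟨LinearMap.toMatrix' f, 0, fun i => ?_⟩
  have h1 : f (X.col i) = z i := by
    have h2 := LinearMap.congr_fun hf (Module.Basis.span hli i)
    rw [Module.Basis.constr_basis] at h2
    rw [← h2, LinearMap.comp_apply, Submodule.subtype_apply, Module.Basis.span_apply]
  rw [add_zero, LinearMap.toMatrix'_mulVec, ← hz i, ← h1]
  rfl
end

section
/- Let σ : ℝ^M → ℝ be continuously differentiable with nonvanishing gradient at every point (i.e., σ is a C¹ submersion), and let X be a real M × N matrix with rank N. Consider the map G : ℝ^{M×M} × ℝ^M → ℝ^N defined by G(W, b)_i = σ(W X_i + b), where X_i is the i-th column of X. Then for every (W, b), the Fréchet derivative of G at (W, b) is a surjective linear map onto ℝ^N; equivalently, the N × (M² + M) Jacobian matrix D of G with respect to the parameters (W, b) has full rank N. -/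
open Matrix

theorem submersion_network_jacobian_full_rank {M N : ℕ}
    (σ : (Fin M → ℝ) → ℝ) (hσ : ContDiff ℝ 1 σ) (hsub : ∀ z, fderiv ℝ σ z ≠ 0)
    (X : Matrix (Fin M) (Fin N) ℝ) (hrank : X.rank = N) :
    ∀ (W : Fin M → Fin M → ℝ) (b : Fin M → ℝ),
      Function.Surjective
        (fderiv ℝ
          (fun p : (Fin M → Fin M → ℝ) × (Fin M → ℝ) =>
            fun i : Fin N => σ (fun α => (∑ j, p.1 α j * X j i) + p.2 α))
          (W, b)) := by
  intro W b y
  have hsurj : Function.Surjective (Xᵀ).mulVecLin := by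
    rw [← LinearMap.range_eq_top]
    apply Submodule.eq_top_of_finrank_eq
    have h : (Xᵀ).rank = N := by rw [Matrix.rank_transpose, hrank]
    rw [Matrix.rank] at h
    rw [h]; simp
  let A : Fin N → (((Fin M → Fin M → ℝ) × (Fin M → ℝ)) →ₗ[ℝ] (Fin M → ℝ)) := fun i =>
    { toFun := fun p α => (∑ j, p.1 α j * X j i) + p.2 α
      map_add' := by
        intro p q; ext α
        simp [add_mul, Finset.sum_add_distrib]; ring
      map_smul' := by
        intro c p; ext α
        simp [mul_add, Finset.mul_sum, mul_assoc] }
  have hd : HasFDerivAt (fun p : (Fin M → Fin M → ℝ) × (Fin M → ℝ) =>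
            fun i : Fin N => σ (fun α => (∑ j, p.1 α j * X j i) + p.2 α))
      (ContinuousLinearMap.pi fun i => (fderiv ℝ σ (A i (W, b))).comp
        (LinearMap.toContinuousLinearMap (A i))) (W, b) := by
    rw [hasFDerivAt_pi]
    intro i
    have h1 : HasFDerivAt σ (fderiv ℝ σ (A i (W, b))) (LinearMap.toContinuousLinearMap (A i) (W, b)) :=
      (hσ.differentiable (by norm_num) _).hasFDerivAt
    exact h1.comp (W, b) (LinearMap.toContinuousLinearMap (A i)).hasFDerivAt
  rw [hd.fderiv]
  have hv : ∀ i, ∃ v, fderiv ℝ σ (A i (W, b)) v = y i := by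
    intro i
    obtain ⟨u, hu⟩ : ∃ u, fderiv ℝ σ (A i (W, b)) u ≠ 0 := by
      by_contra! h
      exact hsub _ (ContinuousLinearMap.ext h)
    refine ⟨(y i / fderiv ℝ σ (A i (W, b)) u) • u, ?_⟩
    rw [map_smul, smul_eq_mul, div_mul_cancel₀ _ hu]
  choose v hv using hv
  choose V hV using fun α => hsurj (fun i => v i α)
  refine ⟨(V, 0), ?_⟩
  ext i
  have hA : A i (V, 0) = v i := by
    ext α
    have := congrFun (hV α) i
    simpa [A, Matrix.vecMul, dotProduct] using this
  simp [hA, hv]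
end

section
/- Let X be a real M × N matrix with columns X_i (N ≤ M), let W ∈ ℝ^{M×M} and b ∈ ℝ^M, and suppose the points W X_1 + b, …, W X_N + b ∈ ℝ^M are pairwise distinct. Then there exists a polynomial function σ : ℝ^M → ℝ such that the Fréchet derivative at (W, b) of the map (W', b') ↦ (σ(W' X_i + b'))_{i=1,…,N} from ℝ^{M×M} × ℝ^M to ℝ^N is surjective, i.e., the training Jacobian D is full rank N. If moreover no column X_i is the zero vector, then σ can be chosen so that additionally the Jacobian of the bias-omitted map W' ↦ (σ(W' X_i))_{i=1,…,N} at W is surjective. -/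
open Matrix

theorem aux_hasFDerivAt {M : ℕ} (p : MvPolynomial (Fin M) ℝ) (x : Fin M → ℝ) :
    HasFDerivAt (fun x : Fin M → ℝ => MvPolynomial.eval x p)
      (∑ α, MvPolynomial.eval x (MvPolynomial.pderiv α p) •
        (ContinuousLinearMap.proj α : (Fin M → ℝ) →L[ℝ] ℝ)) x := by
  induction p using MvPolynomial.induction_on with
  | C a => simpa using hasFDerivAt_const a x
  | add p q hp hq =>
    simp only [map_add, add_smul, Finset.sum_add_distrib]
    exact hp.add hq
  | mul_X p i hp =>
    have h := hp.mul ((ContinuousLinearMap.proj i : (Fin M → ℝ) →L[ℝ] ℝ).hasFDerivAt (x := x))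
    simp only [map_mul, MvPolynomial.eval_X]
    refine h.congr_fderiv ?_
    ext v
    simp [MvPolynomial.pderiv_X, Pi.single_apply, Finset.mul_sum, apply_ite, mul_comm]
    simp only [mul_add, Finset.sum_add_distrib]
    simp [mul_left_comm]

theorem aux_lagrange {M : ℕ} (S : Finset (Fin M → ℝ)) (s : Fin M → ℝ) :
    ∃ L : MvPolynomial (Fin M) ℝ, MvPolynomial.eval s L = 1 ∧
      ∀ r ∈ S, r ≠ s → MvPolynomial.eval r L = 0 := by
  classical
  let Q : MvPolynomial (Fin M) ℝ := ∏ r ∈ S.erase s,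
    ∑ α, (MvPolynomial.X α - MvPolynomial.C (r α)) ^ 2
  have hQ : MvPolynomial.eval s Q ≠ 0 := by
    simp only [Q, map_prod, map_sum, map_pow, map_sub, MvPolynomial.eval_X, MvPolynomial.eval_C]
    refine Finset.prod_ne_zero_iff.2 fun r hr h => (Finset.mem_erase.1 hr).1 ?_
    rw [Finset.sum_eq_zero_iff_of_nonneg (fun _ _ => sq_nonneg _)] at h
    ext α
    have := h α (Finset.mem_univ _)
    have := pow_eq_zero_iff (two_ne_zero) |>.1 this
    linarith
  refine ⟨MvPolynomial.C (MvPolynomial.eval s Q)⁻¹ * Q, by simp [hQ], fun r hr hrs => ?_⟩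
  have : MvPolynomial.eval r Q = 0 := by
    simp only [Q, map_prod]
    exact Finset.prod_eq_zero (Finset.mem_erase.2 ⟨hrs, hr⟩) (by simp)
  simp [this]

theorem aux_grad {M : ℕ} (S : Finset (Fin M → ℝ)) (G : (Fin M → ℝ) → Fin M → ℝ) :
    ∃ p : MvPolynomial (Fin M) ℝ, ∀ s ∈ S, ∀ α,
      MvPolynomial.eval s (MvPolynomial.pderiv α p) = G s α := by
  classical
  choose L hL1 hL0 using aux_lagrange S
  refine ⟨∑ r ∈ S, L r * L r * ∑ β, MvPolynomial.C (G r β) *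
    (MvPolynomial.X β - MvPolynomial.C (r β)), fun s hs α => ?_⟩
  rw [map_sum, map_sum, Finset.sum_eq_single s]
  · simp [hL1, MvPolynomial.pderiv_X, Pi.single_apply, apply_ite, map_sum]
  · intro r hr hrs
    simp [hL0 r s hs hrs.symm]
  · exact fun h => absurd hs h

theorem aux_vandermonde {M N : ℕ} (hNM : N ≤ M) (t : Fin N → ℝ) (ht : Function.Injective t)
    (y : Fin N → ℝ) : ∃ v : Fin M → ℝ, ∀ i, ∑ α : Fin M, t i ^ (α : ℕ) * v α = y i := by
  let P := Lagrange.interpolate Finset.univ t y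
  have hd : P.degree < (M : ℕ) := by
    refine lt_of_lt_of_le (Lagrange.degree_interpolate_lt y ht.injOn) ?_
    simpa using hNM
  refine ⟨fun α => P.coeff α, fun i => ?_⟩
  rw [← Lagrange.eval_interpolate_at_node y ht.injOn (Finset.mem_univ i)]
  change _ = P.eval (t i)
  have hP : P.eval (t i) = ∑ k ∈ Finset.range M, P.coeff k * t i ^ k := by
    by_cases h0 : P = 0
    · simp [h0]
    · exact Polynomial.eval_eq_sum_range' ((Polynomial.natDegree_lt_iff_degree_lt h0).2 hd) _
  rw [hP, ← Fin.sum_univ_eq_sum_range (fun k => P.coeff k * t i ^ k)]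
  exact Finset.sum_congr rfl fun _ _ => mul_comm _ _

/-- A single polynomial works for two injective families of points. -/
theorem aux_poly {M N : ℕ} (hNM : N ≤ M) (z w : Fin N → Fin M → ℝ)
    (hz : Function.Injective z) (hw : Function.Injective w) :
    ∃ p : MvPolynomial (Fin M) ℝ,
      (∀ y : Fin N → ℝ, ∃ v : Fin M → ℝ, ∀ i,
        ∑ α, MvPolynomial.eval (z i) (MvPolynomial.pderiv α p) * v α = y i) ∧
      (∀ y : Fin N → ℝ, ∃ v : Fin M → ℝ, ∀ i,
        ∑ α, MvPolynomial.eval (w i) (MvPolynomial.pderiv α p) * v α = y i) := by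
  classical
  let S := Finset.univ.image z ∪ Finset.univ.image w
  obtain ⟨f, hf⟩ := Set.countable_iff_exists_injOn.1 S.countable_toSet
  obtain ⟨p, hp⟩ := aux_grad S (fun s α => (f s : ℝ) ^ (α : ℕ))
  have hzS : ∀ i, z i ∈ S := fun i => by simp [S]
  have hwS : ∀ i, w i ∈ S := fun i => by simp [S]
  refine ⟨p, fun y => ?_, fun y => ?_⟩
  · obtain ⟨v, hv⟩ := aux_vandermonde hNM (fun i => (f (z i) : ℝ))
      (fun i j h => hz (hf (hzS i) (hzS j) (Nat.cast_injective h))) y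
    exact ⟨v, fun i => by simpa only [hp _ (hzS i)] using hv i⟩
  · obtain ⟨v, hv⟩ := aux_vandermonde hNM (fun i => (f (w i) : ℝ))
      (fun i j h => hw (hf (hwS i) (hwS j) (Nat.cast_injective h))) y
    exact ⟨v, fun i => by simpa only [hp _ (hwS i)] using hv i⟩

theorem aux_fderiv {E : Type*} [NormedAddCommGroup E] [NormedSpace ℝ E] {M N : ℕ}
    (p : MvPolynomial (Fin M) ℝ) (A : Fin N → E →L[ℝ] (Fin M → ℝ)) (e d : E) (i : Fin N) :
    fderiv ℝ (fun q : E => fun i : Fin N => MvPolynomial.eval (A i q) p) e d i =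
      ∑ α, MvPolynomial.eval (A i e) (MvPolynomial.pderiv α p) * A i d α := by
  have h : HasFDerivAt (fun q : E => fun i : Fin N => MvPolynomial.eval (A i q) p)
      (ContinuousLinearMap.pi fun i => (∑ α, MvPolynomial.eval (A i e)
        (MvPolynomial.pderiv α p) • (ContinuousLinearMap.proj α : (Fin M → ℝ) →L[ℝ] ℝ)).comp
          (A i)) e :=
    hasFDerivAt_pi.2 fun i => (aux_hasFDerivAt p (A i e)).comp e (A i).hasFDerivAt
  rw [h.fderiv]
  simp

theorem aux_bias {M N : ℕ} (X : Matrix (Fin M) (Fin N) ℝ)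
    (W : Fin M → Fin M → ℝ) (b : Fin M → ℝ) (p : MvPolynomial (Fin M) ℝ)
    (hp : ∀ y : Fin N → ℝ, ∃ v : Fin M → ℝ, ∀ i,
        ∑ α, MvPolynomial.eval (fun α => (∑ j, W α j * X j i) + b α)
          (MvPolynomial.pderiv α p) * v α = y i) :
    Function.Surjective
          (fderiv ℝ
            (fun q : (Fin M → Fin M → ℝ) × (Fin M → ℝ) =>
              fun i : Fin N =>
                MvPolynomial.eval (fun α => (∑ j, q.1 α j * X j i) + q.2 α) p)
            (W, b)) := by
  let A : Fin N → ((Fin M → Fin M → ℝ) × (Fin M → ℝ)) →ₗ[ℝ] (Fin M → ℝ) := fun i =>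
    { toFun := fun q α => (∑ j, q.1 α j * X j i) + q.2 α
      map_add' := fun q r => by
        ext α; simp [add_mul, Finset.sum_add_distrib]; ring
      map_smul' := fun c q => by
        ext α; simp [mul_add, Finset.mul_sum, mul_assoc] }
  intro y
  obtain ⟨v, hv⟩ := hp y
  refine ⟨(0, v), funext fun i => ?_⟩
  refine (aux_fderiv p (fun i => (A i).toContinuousLinearMap) (W, b) (0, v) i).trans ?_
  rw [← hv i]
  simp [A]

theorem aux_nobias {M N : ℕ} (X : Matrix (Fin M) (Fin N) ℝ)
    (hX : ∀ i : Fin N, (fun j => X j i) ≠ 0)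
    (W : Fin M → Fin M → ℝ) (p : MvPolynomial (Fin M) ℝ)
    (hp : ∀ y : Fin N → ℝ, ∃ v : Fin M → ℝ, ∀ i,
        ∑ α, MvPolynomial.eval (fun α => ∑ j, W α j * X j i)
          (MvPolynomial.pderiv α p) * v α = y i) :
    Function.Surjective
            (fderiv ℝ
              (fun W' : Fin M → Fin M → ℝ =>
                fun i : Fin N =>
                  MvPolynomial.eval (fun α => ∑ j, W' α j * X j i) p)
              W) := by
  let A : Fin N → (Fin M → Fin M → ℝ) →ₗ[ℝ] (Fin M → ℝ) := fun i =>
    { toFun := fun q α => ∑ j, q α j * X j i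
      map_add' := fun q r => by
        ext α; simp [add_mul, Finset.sum_add_distrib]
      map_smul' := fun c q => by
        ext α; simp [Finset.mul_sum, mul_assoc] }
  intro y
  choose v hv using fun k : Fin N => hp (Pi.single k 1)
  have hn : ∀ i, ∑ j, X j i * X j i ≠ 0 := fun i h => hX i (by
    rw [Finset.sum_eq_zero_iff_of_nonneg (fun _ _ => mul_self_nonneg _)] at h
    ext j
    exact mul_self_eq_zero.1 (h j (Finset.mem_univ _)))
  let V : Fin N → Fin M → Fin M → ℝ := fun k α j => (y k / ∑ j, X j k * X j k) * (v k α * X j k)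
  refine ⟨∑ k, V k, ?_⟩
  rw [map_sum]
  ext i
  rw [Finset.sum_apply]
  refine (Finset.sum_congr rfl fun k _ =>
    aux_fderiv p (fun i => (A i).toContinuousLinearMap) W (V k) i).trans ?_
  have key : ∀ k, ∑ α, MvPolynomial.eval ((A i).toContinuousLinearMap W)
      (MvPolynomial.pderiv α p) * (A i).toContinuousLinearMap (V k) α =
      (y k / ∑ j, X j k * X j k) * (∑ j, X j k * X j i) * (Pi.single k 1 : Fin N → ℝ) i := by
    intro k
    rw [← hv k i, Finset.mul_sum]
    refine Finset.sum_congr rfl fun α _ => ?_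
    have : (A i).toContinuousLinearMap (V k) α =
        (y k / ∑ j, X j k * X j k) * v k α * (∑ j, X j k * X j i) := by
      change ∑ j, V k α j * X j i = _
      rw [Finset.mul_sum]
      exact Finset.sum_congr rfl fun j _ => by simp only [V]; ring
    rw [this]
    change MvPolynomial.eval (fun α => ∑ j, W α j * X j i) _ * _ = _
    ring
  rw [Finset.sum_congr rfl fun k _ => key k, Finset.sum_eq_single i]
  · simp [div_mul_cancel₀ _ (hn i)]
  · intro k _ hk
    simp [Pi.single_apply, hk.symm]
  · simp

theorem exists_polynomial_full_rank_jacobian {M N : ℕ}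
    (X : Matrix (Fin M) (Fin N) ℝ) (hNM : N ≤ M)
    (W : Fin M → Fin M → ℝ) (b : Fin M → ℝ)
    (hdist : Function.Injective
      (fun i : Fin N => fun α : Fin M => (∑ j, W α j * X j i) + b α)) :
    (∃ p : MvPolynomial (Fin M) ℝ,
        Function.Surjective
          (fderiv ℝ
            (fun q : (Fin M → Fin M → ℝ) × (Fin M → ℝ) =>
              fun i : Fin N =>
                MvPolynomial.eval (fun α => (∑ j, q.1 α j * X j i) + q.2 α) p)
            (W, b))) ∧
      ((∀ i : Fin N, (fun j => X j i) ≠ 0) →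
        ∃ p : MvPolynomial (Fin M) ℝ,
          Function.Surjective
            (fderiv ℝ
              (fun q : (Fin M → Fin M → ℝ) × (Fin M → ℝ) =>
                fun i : Fin N =>
                  MvPolynomial.eval (fun α => (∑ j, q.1 α j * X j i) + q.2 α) p)
              (W, b)) ∧
          Function.Surjective
            (fderiv ℝ
              (fun W' : Fin M → Fin M → ℝ =>
                fun i : Fin N =>
                  MvPolynomial.eval (fun α => ∑ j, W' α j * X j i) p)
              W)) := by
  have hw : Function.Injective (fun i : Fin N => fun α : Fin M => ∑ j, W α j * X j i) := by
    intro i k h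
    refine hdist (funext fun α => ?_)
    have := congrFun h α
    simp only at this ⊢
    rw [this]
  obtain ⟨p, h1, h2⟩ := aux_poly hNM _ _ hdist hw
  exact ⟨⟨p, aux_bias X W b p h1⟩, fun hX => ⟨p, aux_bias X W b p h1, aux_nobias X hX W p h2⟩⟩
end

section
/- Assume M > N and Q ≤ M. Let σ : ℝ^M → ℝ^M be a map for which there exist a point z ∈ ℝ^M and an open neighborhood U of z such that σ restricted to U is injective and σ(U) is open. Let X⁰ ∈ ℝ^{M×N} be a data matrix of rank N (generic training data), and let Y ∈ ℝ^{Q×N} be the target output matrix. Then for every number of hidden layers L ≥ 0 there exist weight matrices W_1, …, W_L ∈ ℝ^{M×M}, W_{L+1} ∈ ℝ^{Q×M} and bias vectors b_1, …, b_L ∈ ℝ^M, b_{L+1} ∈ ℝ^Q such that, defining recursively X^{(ℓ)}_i = σ(W_ℓ X^{(ℓ−1)}_i + b_ℓ) for ℓ = 1, …, L (where X^{(0)}_i is the i-th column of X⁰), one has W_{L+1} X^{(L)}_i + b_{L+1} = Y_i for every i = 1, …, N, where Y_i is the i-th column of Y. That is, the deep network achieves exactly zero ℒ² loss. -/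
open Matrix

/-- Hidden-layer recursion: `fwd M σ W b ℓ x` is the output `X^{(ℓ)}` of the `ℓ`-th hidden
layer on input `x = X^{(0)}`, where `W ℓ`, `b ℓ` (0-based) are the weight and bias of the
`(ℓ+1)`-st hidden layer. -/
def fwd (M : ℕ) (σ : (Fin M → ℝ) → Fin M → ℝ)
    (W : ℕ → Matrix (Fin M) (Fin M) ℝ) (b : ℕ → Fin M → ℝ) :
    ℕ → (Fin M → ℝ) → Fin M → ℝ
  | 0, x => x
  | ℓ + 1, x => σ ((W ℓ).mulVec (fwd M σ W b ℓ x) + b ℓ)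

theorem exists_matrix_mulVec {M N K : ℕ} (x : Fin N → Fin M → ℝ)
    (hx : LinearIndependent ℝ x) (v : Fin N → Fin K → ℝ) :
    ∃ A : Matrix (Fin K) (Fin M) ℝ, ∀ i, A.mulVec (x i) = v i := by
  obtain ⟨g, hg⟩ := LinearMap.exists_leftInverse_of_injective
    (Fintype.linearCombination ℝ x) (LinearMap.ker_eq_bot.2 hx.fintypeLinearCombination_injective)
  refine ⟨LinearMap.toMatrix' ((Fintype.linearCombination ℝ v).comp g), fun i => ?_⟩
  have h := LinearMap.congr_fun hg (Pi.single i 1)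
  simp [Fintype.linearCombination_apply_single] at h
  rw [LinearMap.toMatrix'_mulVec, LinearMap.comp_apply, h,
    Fintype.linearCombination_apply_single, one_smul]

theorem exists_linearIndependent_mem {M N : ℕ} (hMN : N < M) (S : Set (Fin M → ℝ))
    (hS : IsOpen S) (hne : S.Nonempty) :
    ∃ y : Fin N → Fin M → ℝ, LinearIndependent ℝ y ∧ ∀ i, y i ∈ S := by
  have hspan : Submodule.span ℝ S = ⊤ := by
    apply Submodule.eq_top_of_nonempty_interior'
    obtain ⟨p, hp⟩ := hne
    exact ⟨p, mem_interior.2 ⟨S, Submodule.subset_span, hS, hp⟩⟩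
  obtain ⟨b, hbS, hb, hli⟩ := exists_linearIndependent ℝ S
  let B := Module.Basis.mk hli (by simp [hb, hspan])
  let e := B.indexEquiv (Pi.basisFun ℝ (Fin M))
  refine ⟨fun i => (e.symm (Fin.castLE hMN.le i) : Fin M → ℝ), ?_, fun i => hbS (Subtype.prop _)⟩
  exact hli.comp (fun i => e.symm (Fin.castLE hMN.le i))
    (e.symm.injective.comp (Fin.castLE_injective hMN.le))

theorem deep_network_zero_loss {M N Q : ℕ} (hMN : N < M) (hQM : Q ≤ M)
    (σ : (Fin M → ℝ) → Fin M → ℝ)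
    (z : Fin M → ℝ) (U : Set (Fin M → ℝ)) (hU : IsOpen U) (hz : z ∈ U)
    (hinj : Set.InjOn σ U) (hopen : IsOpen (σ '' U))
    (X0 : Matrix (Fin M) (Fin N) ℝ) (hrank : X0.rank = N)
    (Y : Matrix (Fin Q) (Fin N) ℝ) (L : ℕ) :
    ∃ (W : ℕ → Matrix (Fin M) (Fin M) ℝ) (b : ℕ → Fin M → ℝ)
      (Wout : Matrix (Fin Q) (Fin M) ℝ) (bout : Fin Q → ℝ),
      ∀ i : Fin N,
        Wout.mulVec (fwd M σ W b L (fun j => X0 j i)) + bout = fun q => Y q i := by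
  have hX : LinearIndependent ℝ (fun i : Fin N => fun j => X0 j i) := by
    rw [linearIndependent_iff_card_eq_finrank_span, Fintype.card_fin]
    rw [Matrix.rank_eq_finrank_span_cols] at hrank
    exact hrank.symm
  obtain ⟨y, hy, hyS⟩ := exists_linearIndependent_mem hMN _ hopen ⟨_, z, hz, rfl⟩
  choose v hvU hv using hyS
  obtain ⟨A, hA⟩ := exists_matrix_mulVec _ hX v
  obtain ⟨B, hB⟩ := exists_matrix_mulVec _ hy v
  let W : ℕ → Matrix (Fin M) (Fin M) ℝ := fun l => if l = 0 then A else B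
  have hf : ∀ l i, fwd M σ W 0 (l + 1) (fun j => X0 j i) = y i := by
    intro l i
    induction l with
    | zero => simp [fwd, W, hA, hv]
    | succ l ih => rw [fwd, ih]; simp [W, hB, hv]
  cases L with
  | zero =>
    obtain ⟨C, hC⟩ := exists_matrix_mulVec _ hX (fun i q => Y q i)
    exact ⟨W, 0, C, 0, fun i => by rw [fwd, hC, add_zero]⟩
  | succ l =>
    obtain ⟨C, hC⟩ := exists_matrix_mulVec _ hy (fun i q => Y q i)
    exact ⟨W, 0, C, 0, fun i => by rw [hf, hC, add_zero]⟩
end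

section
/- Assume M > N and Q ≤ M. Let σ : ℝ → ℝ be a strictly monotone continuous bijection from ℝ onto the open interval (0, ∞) (a diffeomorphism ℝ → ℝ₊), extended coordinatewise to a map ℝ^M → (0,∞)^M. Let X⁰ ∈ ℝ^{M×N} have rank N, let Y ∈ ℝ^{Q×N} be the target matrix, let L ≥ 1, and let W_2, …, W_L ∈ ℝ^{M×M} be arbitrary given invertible matrices. Then there exist W_1 ∈ ℝ^{M×M}, W_{L+1} ∈ ℝ^{Q×M}, and bias vectors b_1, …, b_L ∈ ℝ^M, b_{L+1} ∈ ℝ^Q such that, defining recursively X^{(ℓ)}_i = σ(W_ℓ X^{(ℓ−1)}_i + b_ℓ) for ℓ = 1, …, L (with X^{(0)}_i the i-th column of X⁰), one has W_{L+1} X^{(L)}_i + b_{L+1} = Y_i for every i = 1, …, N. -/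
open Matrix

theorem fwd_congr_bias (M : ℕ) (σ : (Fin M → ℝ) → Fin M → ℝ)
    (W : ℕ → Matrix (Fin M) (Fin M) ℝ) (b b' : ℕ → Fin M → ℝ) (x : Fin M → ℝ) (n : ℕ)
    (h : ∀ k, k < n → b k = b' k) : fwd M σ W b n x = fwd M σ W b' n x := by
  induction n with
  | zero => rfl
  | succ n ih =>
    simp only [fwd]
    rw [ih (fun k hk => h k (by omega)), h n (by omega)]

theorem exists_left_inv {M N : ℕ} (X0 : Matrix (Fin M) (Fin N) ℝ) (hrank : X0.rank = N) :
    ∃ A : Matrix (Fin N) (Fin M) ℝ, A * X0 = 1 := by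
  have hinj : LinearMap.ker X0.mulVecLin = ⊥ := by
    have h := LinearMap.finrank_range_add_finrank_ker X0.mulVecLin
    have h2 : Module.finrank ℝ (LinearMap.range X0.mulVecLin) = N := hrank
    rw [h2] at h
    simp only [Module.finrank_fin_fun] at h
    exact Submodule.finrank_eq_zero.mp (by omega)
  obtain ⟨g, hg⟩ := LinearMap.exists_leftInverse_of_injective _ hinj
  refine ⟨LinearMap.toMatrix' g, ?_⟩
  have h3 : LinearMap.toMatrix' (g ∘ₗ X0.mulVecLin) = 1 := by
    rw [hg]; exact LinearMap.toMatrix'_id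
  rw [LinearMap.toMatrix'_comp] at h3
  rwa [← Matrix.toLin'_apply', LinearMap.toMatrix'_toLin'] at h3

theorem hidden_reach {M N : ℕ} (σ : ℝ → ℝ) (hσ : ∀ y, 0 < y → ∃ x, σ x = y)
    (X0 : Matrix (Fin M) (Fin N) ℝ) (hrank : X0.rank = N)
    (Wg : ℕ → Matrix (Fin M) (Fin M) ℝ) (n : ℕ)
    (hW : ∀ ℓ, 1 ≤ ℓ → ℓ < n + 1 → IsUnit (Wg ℓ)) (T : Fin N → Fin M → ℝ)
    (hT : ∀ i j, 0 < T i j) :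
    ∃ (W1 : Matrix (Fin M) (Fin M) ℝ) (b : ℕ → Fin M → ℝ), ∀ i : Fin N,
      fwd M (fun v k => σ (v k)) (fun ℓ => if ℓ = 0 then W1 else Wg ℓ) b (n + 1)
        (fun j => X0 j i) = T i := by
  induction n generalizing T with
  | zero =>
    choose S hS using fun i j => hσ (T i j) (hT i j)
    obtain ⟨A, hA⟩ := exists_left_inv X0 hrank
    refine ⟨Matrix.of (fun j i => S i j) * A, fun _ => 0, fun i => ?_⟩
    have h : (Matrix.of (fun j i => S i j) * A) * X0 = Matrix.of (fun j i => S i j) := by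
      rw [Matrix.mul_assoc, hA, Matrix.mul_one]
    funext k
    have hk := congrFun (congrFun h k) i
    simp only [fwd, if_true, add_zero]
    rw [← hS i k]
    congr 1
  | succ n ih =>
    choose S hS using fun i j => hσ (T i j) (hT i j)
    have hu := hW (n + 1) (by omega) (by omega)
    obtain ⟨V, hV⟩ := hu.exists_right_inv
    obtain ⟨c, hc⟩ : ∃ c : ℝ, ∀ p : Fin N × Fin M, -c < (V.mulVec (S p.1)) p.2 := by
      obtain ⟨m, hm⟩ := (Set.finite_range
        (fun p : Fin N × Fin M => -(V.mulVec (S p.1)) p.2)).bddAbove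
      refine ⟨m + 1, fun p => ?_⟩
      have : -(V.mulVec (S p.1)) p.2 ≤ m := hm (Set.mem_range_self p)
      linarith
    obtain ⟨W1, b, hb⟩ := ih (fun ℓ h1 h2 => hW ℓ h1 (by omega))
      (fun i => V.mulVec (S i) + fun _ => c)
      (fun i j => by have := hc (i, j); simp only [Pi.add_apply] at this ⊢; linarith)
    refine ⟨W1, Function.update b (n + 1) (-((Wg (n + 1)).mulVec fun _ => c)), fun i => ?_⟩
    rw [fwd, fwd_congr_bias M _ _ _ b _ (n + 1) (fun k hk => by
      rw [Function.update_of_ne (by omega)]), hb i]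
    funext k
    rw [← hS i k]
    simp [Matrix.mulVec_add, Matrix.mulVec_mulVec, hV]

theorem deep_network_zero_loss_fixed_hidden_weights {M N Q L : ℕ}
    (hMN : N < M) (hQM : Q ≤ M) (hL : 1 ≤ L)
    (σ : ℝ → ℝ) (hmono : StrictMono σ ∨ StrictAnti σ) (hcont : Continuous σ)
    (hrange : Set.range σ = Set.Ioi (0 : ℝ))
    (X0 : Matrix (Fin M) (Fin N) ℝ) (hrank : X0.rank = N)
    (Y : Matrix (Fin Q) (Fin N) ℝ)
    (Wgiven : ℕ → Matrix (Fin M) (Fin M) ℝ)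
    (hWgiven : ∀ ℓ, 1 ≤ ℓ → ℓ < L → IsUnit (Wgiven ℓ)) :
    ∃ (W : ℕ → Matrix (Fin M) (Fin M) ℝ) (b : ℕ → Fin M → ℝ)
      (Wout : Matrix (Fin Q) (Fin M) ℝ) (bout : Fin Q → ℝ),
      (∀ ℓ, 1 ≤ ℓ → ℓ < L → W ℓ = Wgiven ℓ) ∧
        ∀ i : Fin N,
          Wout.mulVec (fwd M (fun v k => σ (v k)) W b L (fun j => X0 j i)) + bout =
            fun q => Y q i := by
  obtain ⟨n, rfl⟩ : ∃ n, L = n + 1 := ⟨L - 1, by omega⟩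
  have hσ : ∀ y, 0 < y → ∃ x, σ x = y := fun y hy => by
    have : y ∈ Set.range σ := by rw [hrange]; exact hy
    exact this
  obtain ⟨W1, b, hb⟩ := hidden_reach σ hσ X0 hrank Wgiven n hWgiven
    (fun i j => 1 + if j = Fin.castLE hMN.le i then 1 else 0)
    (fun i j => by split_ifs <;> norm_num)
  let Wo : Matrix (Fin Q) (Fin M) ℝ := fun q j => if h : j.1 < N then Y q ⟨j.1, h⟩ else 0
  refine ⟨fun ℓ => if ℓ = 0 then W1 else Wgiven ℓ, b, Wo, fun q => -∑ j, Wo q j, fun ℓ h1 _ => ?_, fun i => ?_⟩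
  rotate_left
  · rw [hb i]
    funext q
    simp only [Pi.add_apply, Matrix.mulVec, dotProduct, mul_add, Finset.sum_add_distrib,
      mul_one, mul_ite, mul_zero, Finset.sum_ite_eq', Finset.sum_ite_eq, Finset.mem_univ, if_true]
    simp [Wo]
  · exact if_neg (by omega)
end

section
/- Assume M > N, Q ≤ M, and L ≥ 2. Let σ : ℝ → ℝ be a strictly monotone continuous bijection from ℝ onto (0, ∞), applied coordinatewise, let X⁰ ∈ ℝ^{M×N} have rank N, and let Y ∈ ℝ^{Q×N}. Then the set of parameter tuples (W_1, …, W_{L+1}, b_1, …, b_{L+1}) for which the deep network achieves exactly zero ℒ² loss (i.e., W_{L+1} X^{(L)}_i + b_{L+1} = Y_i for all i, with X^{(ℓ)} defined by the layer recursion) is infinite. In particular, the global zero loss minimum of the cost is degenerate. -/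
open Matrix

/-- A matrix of full column rank has a left inverse. -/
lemma exists_left_inv_aux {M N : ℕ} (X : Matrix (Fin M) (Fin N) ℝ) (h : X.rank = N) :
    ∃ B : Matrix (Fin N) (Fin M) ℝ, B * X = 1 := by
  have hli : LinearIndependent ℝ X.col := by
    rw [linearIndependent_iff_card_eq_finrank_span, Fintype.card_fin, Set.finrank,
      ← Matrix.rank_eq_finrank_span_cols, h]
  have hinj : Function.Injective X.mulVec := Matrix.mulVec_injective_iff.2 hli
  obtain ⟨g, hg⟩ := LinearMap.exists_leftInverse_of_injective X.mulVecLin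
    (LinearMap.ker_eq_bot.2 hinj)
  refine ⟨LinearMap.toMatrix' g, ?_⟩
  have := congrArg LinearMap.toMatrix' hg
  rw [LinearMap.toMatrix'_comp, LinearMap.toMatrix'_id] at this
  rw [← this]
  congr 1
  exact (LinearMap.toMatrix'_toLin' X).symm

/-- With identity weights after the first layer, the network acts coordinatewise. -/
lemma fwd_aux {M L : ℕ} (σ : ℝ → ℝ) (A : Matrix (Fin M) (Fin M) ℝ) (t : ℝ) (x : Fin M → ℝ)
    (ℓ : ℕ) (hℓ : ℓ < L) :
    fwd M (fun v k => σ (v k))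
      (fun ℓ => if h : ℓ < L then
        (fun m : Fin L => if (m : ℕ) = 0 then A else (1 : Matrix (Fin M) (Fin M) ℝ)) ⟨ℓ, h⟩ else 0)
      (fun ℓ => if h : ℓ < L then (fun (_ : Fin L) (_ : Fin M) => t) ⟨ℓ, h⟩ else 0)
      (ℓ + 1) x = fun k => (fun u => σ (u + t))^[ℓ + 1] (A.mulVec x k) := by
  induction ℓ with
  | zero => 
    funext k
    simp [fwd, hℓ]
  | succ n ih =>
    rw [fwd, ih (by omega)]
    funext k
    simp [hℓ, Function.iterate_succ_apply', -Function.iterate_succ]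

theorem zero_loss_minimizers_infinite {M N Q L : ℕ}
    (hMN : N < M) (hQM : Q ≤ M) (hL : 2 ≤ L)
    (σ : ℝ → ℝ) (hmono : StrictMono σ ∨ StrictAnti σ) (hcont : Continuous σ)
    (hrange : Set.range σ = Set.Ioi (0 : ℝ))
    (X0 : Matrix (Fin M) (Fin N) ℝ) (hrank : X0.rank = N)
    (Y : Matrix (Fin Q) (Fin N) ℝ) :
    {p : (Fin L → Matrix (Fin M) (Fin M) ℝ) × (Fin L → Fin M → ℝ) ×
        Matrix (Fin Q) (Fin M) ℝ × (Fin Q → ℝ) |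
      ∀ i : Fin N,
        (p.2.2.1).mulVec
            (fwd M (fun v k => σ (v k))
              (fun ℓ => if h : ℓ < L then p.1 ⟨ℓ, h⟩ else 0)
              (fun ℓ => if h : ℓ < L then p.2.1 ⟨ℓ, h⟩ else 0)
              L (fun j => X0 j i)) + p.2.2.2 = fun q => Y q i}.Infinite := by
  have hσ : Function.Injective σ := hmono.elim StrictMono.injective StrictAnti.injective
  obtain ⟨B, hB⟩ := exists_left_inv_aux X0 hrank
  let z : Fin M := ⟨N, hMN⟩
  let E : Matrix (Fin M) (Fin N) ℝ := fun j i => if (j : ℕ) = i then 1 else 0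
  let g : ℝ → ℝ → ℝ := fun t => (fun u => σ (u + t))^[L]
  have hg : ∀ t, g t 1 - g t 0 ≠ 0 := by
    intro t h
    have hi : Function.Injective (g t) :=
      Function.Injective.iterate (fun u v huv => add_right_cancel (hσ huv)) L
    exact one_ne_zero (hi (sub_eq_zero.1 h))
  let P : ℝ → Matrix (Fin Q) (Fin M) ℝ := fun t q j =>
    if h : (j : ℕ) < N then Y q ⟨j, h⟩ / (g t 1 - g t 0) else 0
  let c : ℝ → Matrix (Fin Q) (Fin M) ℝ := fun t q j => if j = z then -∑ k, P t q k else 0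
  let f : ℝ → (Fin L → Matrix (Fin M) (Fin M) ℝ) × (Fin L → Fin M → ℝ) ×
        Matrix (Fin Q) (Fin M) ℝ × (Fin Q → ℝ) := fun t =>
    (fun m => if (m : ℕ) = 0 then E * B else 1, fun _ _ => t, P t + c t, 0)
  refine Set.infinite_of_injective_forall_mem (f := f) ?_ ?_
  · intro s t hst
    exact congrFun (congrFun (congrArg (fun p => p.2.1) hst) ⟨0, by omega⟩) z
  · intro t i
    obtain ⟨L', rfl⟩ : ∃ L', L = L' + 1 := ⟨L - 1, by omega⟩
    have h1 : (E * B).mulVec (fun j => X0 j i) = fun k => E k i := by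
      have : (E * B) * X0 = E := by rw [Matrix.mul_assoc, hB, Matrix.mul_one]
      funext k
      exact congrFun (congrFun this k) i
    have h2 := fwd_aux (L := L' + 1) σ (E * B) t (fun j => X0 j i) L' (by omega)
    rw [h1] at h2
    simp only [f]
    rw [h2, add_zero]
    have hE : ∀ k, (fun u => σ (u + t))^[L' + 1] (E k i) =
        g t 0 + if k = ⟨i, i.2.trans hMN⟩ then g t 1 - g t 0 else 0 := by
      intro k
      by_cases hk : (k : ℕ) = i
      · have : k = ⟨i, i.2.trans hMN⟩ := Fin.ext hk
        simp only [E, if_pos hk, if_pos this, g]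
        ring
      · have : k ≠ ⟨i, i.2.trans hMN⟩ := fun h => hk (congrArg Fin.val h)
        simp only [E, if_neg hk, if_neg this, g]
        ring
    funext q
    simp only [hE, Matrix.mulVec, dotProduct, Matrix.add_apply]
    have hzi : z ≠ ⟨i, i.2.trans hMN⟩ := fun h => by
      have := congrArg Fin.val h
      have := i.2
      simp [z] at *
      omega
    have hP : P t q ⟨i, i.2.trans hMN⟩ * (g t 1 - g t 0) = Y q i := by
      simp only [P, i.2, dif_pos]
      exact div_mul_cancel₀ _ (hg t)
    simp only [add_mul, mul_add, Finset.sum_add_distrib, mul_ite, mul_zero,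
      Finset.sum_ite_eq', Finset.sum_ite_eq, Finset.mem_univ, if_true, hP, ← Finset.sum_mul, c,
      if_neg hzi.symm, zero_mul]
    ring
end

section
/- Let σ : ℝ → ℝ be continuously differentiable with σ'(t) ≠ 0 for all t, applied coordinatewise as a map Σ : ℝ^M → ℝ^M. Let L ≥ 1 and consider the scalar-output deep network F(θ)(x) = w · Σ(W_L(⋯ Σ(W_1 x + b_1) ⋯) + b_L) + c with parameters θ = (W_1, …, W_L, b_1, …, b_L, w, c), where W_ℓ ∈ ℝ^{M×M}, b_ℓ ∈ ℝ^M, w ∈ ℝ^M, c ∈ ℝ. Let X ∈ ℝ^{M×N} have rank N with columns X_i. Then at any parameter point θ at which W_2, …, W_L are invertible and w ≠ 0, the Fréchet derivative of the map θ ↦ (F(θ)(X_1), …, F(θ)(X_N)) ∈ ℝ^N is surjective; that is, the training Jacobian D is full rank N. -/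
open Matrix

/-- Hidden-layer recursion with weight matrices given as plain functions:
`fwdFun M σ W b ℓ x` is the output of the `ℓ`-th hidden layer on input `x`, with the scalar
activation `σ` applied coordinatewise. -/
def fwdFun (M : ℕ) (σ : ℝ → ℝ) (W : ℕ → Fin M → Fin M → ℝ) (b : ℕ → Fin M → ℝ) :
    ℕ → (Fin M → ℝ) → Fin M → ℝ
  | 0, x => x
  | ℓ + 1, x => fun α => σ ((∑ j, W ℓ α j * fwdFun M σ W b ℓ x j) + b ℓ α)

theorem aux_left_inv {M N : ℕ} (X : Matrix (Fin M) (Fin N) ℝ) (hrank : X.rank = N) :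
    ∃ A : Matrix (Fin N) (Fin M) ℝ, A * X = 1 := by
  have h1 : Xᵀ.rank = N := by rw [Matrix.rank_transpose, hrank]
  have h2 : Function.Surjective Xᵀ.mulVec := by
    have : LinearMap.range Xᵀ.mulVecLin = ⊤ := by
      apply Submodule.eq_top_of_finrank_eq
      rw [Module.finrank_fin_fun]
      exact h1
    exact LinearMap.range_eq_top.1 this
  obtain ⟨B, hB⟩ := Matrix.mulVec_surjective_iff_exists_right_inverse.1 h2
  refine ⟨Bᵀ, ?_⟩
  have := congrArg Matrix.transpose hB
  simpa [Matrix.transpose_mul] using this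

theorem aux_diff {E : Type*} [NormedAddCommGroup E] [NormedSpace ℝ E] {M : ℕ}
    (σ : ℝ → ℝ) (hσ : Differentiable ℝ σ) (W : E → ℕ → Fin M → Fin M → ℝ)
    (b : E → ℕ → Fin M → ℝ) (x : Fin M → ℝ)
    (hW : ∀ ℓ i j, Differentiable ℝ fun p => W p ℓ i j)
    (hb : ∀ ℓ i, Differentiable ℝ fun p => b p ℓ i) (ℓ : ℕ) :
    ∀ α, Differentiable ℝ fun p => fwdFun M σ (W p) (b p) ℓ x α := by
  induction ℓ with
  | zero => intro α; simp only [fwdFun]; fun_prop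
  | succ ℓ ih =>
    intro α
    simp only [fwdFun]
    apply hσ.comp
    refine Differentiable.add ?_ (hb _ _)
    refine Differentiable.fun_sum fun j _ => ?_
    exact (hW _ _ _).mul (ih j)

theorem aux_curve {M L : ℕ} (σ : ℝ → ℝ) (hσ : Differentiable ℝ σ) (hσ' : ∀ t, deriv σ t ≠ 0)
    (W : ℕ → Fin M → Fin M → ℝ) (b : ℕ → Fin M → ℝ) (x : Fin M → ℝ)
    (hW : ∀ ℓ, 1 ≤ ℓ → ℓ < L → IsUnit (Matrix.of (W ℓ))) (ℓ : ℕ) (hℓ : ℓ < L) :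
    ∃ J : (Fin M → ℝ) → (Fin M → ℝ), Function.Surjective J ∧
      ∀ V : Matrix (Fin M) (Fin M) ℝ, ∀ α, HasDerivAt
        (fun t : ℝ => fwdFun M σ (fun k i j => W k i j + t * (if k = 0 then V i j else 0)) b
          (ℓ + 1) x α) (J (V *ᵥ x) α) 0 := by
  induction ℓ with
  | zero =>
    refine ⟨fun u α => deriv σ ((∑ j, W 0 α j * x j) + b 0 α) * u α, ?_, ?_⟩
    · intro y
      refine ⟨fun α => y α / deriv σ ((∑ j, W 0 α j * x j) + b 0 α), ?_⟩
      funext α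
      exact mul_div_cancel₀ _ (hσ' _)
    · intro V α
      simp only [fwdFun]
      have hin : HasDerivAt (fun t : ℝ => (∑ j, (W 0 α j + t * (if (0:ℕ) = 0 then V α j else 0)) * x j)
          + b 0 α) ((V *ᵥ x) α) 0 := by
        refine HasDerivAt.add_const _ ?_
        refine HasDerivAt.fun_sum fun j _ => ?_
        have := (((hasDerivAt_id (0:ℝ)).mul_const (V α j)).const_add (W 0 α j)).mul_const (x j)
        simpa using this
      refine HasDerivAt.comp (0:ℝ) (h₂ := σ) ?_ hin
      simpa using (hσ _).hasDerivAt
  | succ ℓ ih =>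
    obtain ⟨J, hJ, hd⟩ := ih (by omega)
    set z : Fin M → ℝ := fwdFun M σ W b (ℓ + 1) x with hz
    have hu := hW (ℓ + 1) (by omega) hℓ
    refine ⟨fun u α => deriv σ ((∑ j, W (ℓ+1) α j * z j) + b (ℓ+1) α) *
      ∑ j, W (ℓ+1) α j * J u j, ?_, ?_⟩
    · intro y
      obtain ⟨v, hv⟩ := (Matrix.mulVec_surjective_iff_isUnit.2 hu)
        (fun α => y α / deriv σ ((∑ j, W (ℓ+1) α j * z j) + b (ℓ+1) α))
      obtain ⟨u, rfl⟩ := hJ v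
      refine ⟨u, ?_⟩
      funext α
      have := congrFun hv α
      simp only [Matrix.mulVec, dotProduct, Matrix.of_apply] at this
      simp only [this]
      exact mul_div_cancel₀ _ (hσ' _)
    · intro V α
      have hd' := hd V
      have h0 : fwdFun M σ (fun k i j => W k i j + (0:ℝ) * (if k = 0 then V i j else 0)) b
          (ℓ + 1) x = z := by simp [hz]
      have e : (fun t : ℝ => fwdFun M σ (fun k i j => W k i j + t * (if k = 0 then V i j else 0)) b
          (ℓ + 1 + 1) x α) = fun t : ℝ => σ ((∑ j, W (ℓ+1) α j *
          fwdFun M σ (fun k i j => W k i j + t * (if k = 0 then V i j else 0)) b (ℓ + 1) x j)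
          + b (ℓ+1) α) := by
        funext t
        conv_lhs => unfold fwdFun
        simp only [Nat.add_eq_zero_iff, one_ne_zero, and_false, if_false, mul_zero, add_zero]
      rw [e]
      have hin : HasDerivAt (fun t : ℝ => (∑ j, W (ℓ+1) α j *
          fwdFun M σ (fun k i j => W k i j + t * (if k = 0 then V i j else 0)) b (ℓ + 1) x j)
          + b (ℓ+1) α) (∑ j, W (ℓ+1) α j * J (V *ᵥ x) j) 0 := by
        refine HasDerivAt.add_const _ ?_
        refine HasDerivAt.fun_sum fun j _ => ?_
        exact (hd' j).const_mul _
      refine HasDerivAt.comp (0:ℝ) (h₂ := σ) ?_ hin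
      rw [h0]
      exact (hσ _).hasDerivAt

theorem deep_scalar_network_jacobian_full_rank {M N L : ℕ} (hL : 1 ≤ L)
    (σ : ℝ → ℝ) (hσ : ContDiff ℝ 1 σ) (hσ' : ∀ t, deriv σ t ≠ 0)
    (X : Matrix (Fin M) (Fin N) ℝ) (hrank : X.rank = N)
    (θ : (Fin L → Fin M → Fin M → ℝ) × (Fin L → Fin M → ℝ) × (Fin M → ℝ) × ℝ)
    (hW : ∀ ℓ : Fin L, 1 ≤ (ℓ : ℕ) → IsUnit (Matrix.of (θ.1 ℓ)))
    (hw : θ.2.2.1 ≠ 0) :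
    Function.Surjective
      (fderiv ℝ
        (fun p : (Fin L → Fin M → Fin M → ℝ) × (Fin L → Fin M → ℝ) × (Fin M → ℝ) × ℝ =>
          fun i : Fin N =>
            (∑ k, p.2.2.1 k *
              fwdFun M σ
                (fun ℓ => if h : ℓ < L then p.1 ⟨ℓ, h⟩ else 0)
                (fun ℓ => if h : ℓ < L then p.2.1 ⟨ℓ, h⟩ else 0)
                L (fun j => X j i) k) + p.2.2.2)
        θ) := by
  have hs : Differentiable ℝ σ := hσ.differentiable (by norm_num)
  obtain ⟨A, hA⟩ := aux_left_inv X hrank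
  obtain ⟨k0, hk0⟩ := Function.ne_iff.1 hw
  obtain ⟨n, rfl⟩ : ∃ n, L = n + 1 := ⟨L - 1, by omega⟩
  intro y
  have hc := fun i : Fin N => aux_curve (L := n + 1) σ hs hσ'
    (fun ℓ => if h : ℓ < n + 1 then θ.1 ⟨ℓ, h⟩ else 0)
    (fun ℓ => if h : ℓ < n + 1 then θ.2.1 ⟨ℓ, h⟩ else 0) (fun j => X j i)
    (by intro ℓ h1 h2; simpa [h2] using hW ⟨ℓ, h2⟩ h1) n (by omega)
  choose J hJ hd using hc
  have hu : ∀ i, ∃ u, J i u = Pi.single k0 (y i / θ.2.2.1 k0) := fun i => hJ i _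
  choose u hu using hu
  let V : Matrix (Fin M) (Fin M) ℝ := (Matrix.of fun α i => u i α) * A
  have hV : ∀ i, V *ᵥ (fun j => X j i) = u i := by
    intro i
    have h : V * X = Matrix.of fun α i => u i α := by
      simp only [V, Matrix.mul_assoc, hA, Matrix.mul_one]
    funext α
    exact congrFun (congrFun h α) i
  let d : (Fin (n+1) → Fin M → Fin M → ℝ) × (Fin (n+1) → Fin M → ℝ) × (Fin M → ℝ) × ℝ :=
    (fun k i j => if (k : ℕ) = 0 then V i j else 0, 0, 0, 0)
  refine ⟨d, ?_⟩
  set G := (fun p : (Fin (n+1) → Fin M → Fin M → ℝ) × (Fin (n+1) → Fin M → ℝ) × (Fin M → ℝ) × ℝ =>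
          fun i : Fin N =>
            (∑ k, p.2.2.1 k *
              fwdFun M σ
                (fun ℓ => if h : ℓ < n+1 then p.1 ⟨ℓ, h⟩ else 0)
                (fun ℓ => if h : ℓ < n+1 then p.2.1 ⟨ℓ, h⟩ else 0)
                (n+1) (fun j => X j i) k) + p.2.2.2) with hG
  have hdiff : Differentiable ℝ G := by
    rw [differentiable_pi]
    intro i
    refine Differentiable.add ?_ (by fun_prop)
    refine Differentiable.fun_sum fun k _ => ?_
    refine Differentiable.mul (by fun_prop) ?_
    apply aux_diff σ hs
    · intro ℓ i j
      by_cases h : ℓ < n + 1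
      · simp only [h, dite_true]; fun_prop
      · simp only [h, dite_false]; fun_prop
    · intro ℓ i
      by_cases h : ℓ < n + 1
      · simp only [h, dite_true]; fun_prop
      · simp only [h, dite_false]; fun_prop
  have hline : HasDerivAt (fun t : ℝ => θ + t • d) d 0 := by
    simpa using ((hasDerivAt_id (0:ℝ)).smul_const d).const_add θ
  have h1 : HasDerivAt (fun t : ℝ => G (θ + t • d)) (fderiv ℝ G θ d) 0 := by
    refine HasFDerivAt.comp_hasDerivAt (0:ℝ) (l := G) ?_ hline
    simpa using (hdiff θ).hasFDerivAt
  have h2 : HasDerivAt (fun t : ℝ => G (θ + t • d)) y 0 := by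
    rw [hasDerivAt_pi]
    intro i
    have e : (fun t : ℝ => G (θ + t • d) i) = fun t : ℝ => (∑ k, θ.2.2.1 k *
        fwdFun M σ (fun k i j => (if h : k < n + 1 then θ.1 ⟨k, h⟩ else 0) i j +
            t * (if k = 0 then V i j else 0))
          (fun ℓ => if h : ℓ < n + 1 then θ.2.1 ⟨ℓ, h⟩ else 0) (n+1) (fun j => X j i) k)
        + θ.2.2.2 := by
      funext t
      have eW : (fun ℓ => if h : ℓ < n+1 then (θ + t • d).1 ⟨ℓ, h⟩ else 0) =
          (fun k i j => (if h : k < n + 1 then θ.1 ⟨k, h⟩ else 0) i j +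
            t * (if k = 0 then V i j else 0)) := by
        funext k i j
        by_cases h : k < n + 1
        · simp [h, d]
        · have : k ≠ 0 := by omega
          simp [h, this]
      have eb : (θ + t • d).2 = θ.2 := by simp [d]
      simp only [hG, eW, eb]
    rw [e]
    refine HasDerivAt.add_const _ ?_
    have hsum : y i = ∑ k, θ.2.2.1 k * J i (V *ᵥ fun j => X j i) k := by
      rw [hV, hu]
      have hk : θ.2.2.1 k0 ≠ 0 := hk0
      simp [Pi.single_apply, mul_div_cancel₀ _ hk]
    rw [hsum]
    exact HasDerivAt.fun_sum fun k _ => (hd i V k).const_mul _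
  exact h1.unique h2
end

section
/- Let Σ : ℝ^M → ℝ^M be continuously differentiable with surjective (hence invertible) Fréchet derivative at every point, let X ∈ ℝ^{M×N} have rank N with columns X_i, and let w ∈ ℝ^M with w ≠ 0. Consider the two-layer scalar network f(x) = ⟨w, Σ(W x + B)⟩ with parameters (w, W, B) ∈ ℝ^M × ℝ^{M×M} × ℝ^M. Then at any (W, B), the Fréchet derivative of the map (w, W, B) ↦ (f(X_1), …, f(X_N)) ∈ ℝ^N is surjective; that is, the training Jacobian D = [Σ(WX+B), (w ⋅ dΣ) ⊗̄ Xᵀ, w ⋅ dΣ] has full rank N. -/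
open Matrix

theorem two_layer_network_jacobian_full_rank {M N : ℕ}
    (Sig : (Fin M → ℝ) → Fin M → ℝ) (hSig : ContDiff ℝ 1 Sig)
    (hsub : ∀ z : Fin M → ℝ, Function.Surjective (fderiv ℝ Sig z))
    (X : Matrix (Fin M) (Fin N) ℝ) (hrank : X.rank = N)
    (w : Fin M → ℝ) (hw : w ≠ 0) :
    ∀ (W : Fin M → Fin M → ℝ) (B : Fin M → ℝ),
      Function.Surjective
        (fderiv ℝ
          (fun p : (Fin M → ℝ) × (Fin M → Fin M → ℝ) × (Fin M → ℝ) =>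
            fun i : Fin N =>
              ∑ k, p.1 k * Sig (fun α => (∑ j, p.2.1 α j * X j i) + p.2.2 α) k)
          (w, W, B)) := by
  intro W B y
  have hS : Differentiable ℝ Sig := hSig.differentiable (by norm_num)
  -- the transpose of `X` is surjective
  have hXs : Function.Surjective (Xᵀ).mulVecLin := by
    rw [← LinearMap.range_eq_top]
    apply Submodule.eq_top_of_finrank_eq
    have h : (Xᵀ).rank = N := by rw [Matrix.rank_transpose, hrank]
    rw [Matrix.rank] at h
    rw [h]
    simp
  have hww : (∑ k, w k * w k) ≠ 0 := by
    intro h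
    exact hw (dotProduct_self_eq_zero.mp h)
  -- the required variations of the hidden pre-activations
  have hu : ∀ i : Fin N, ∃ u : Fin M → ℝ,
      fderiv ℝ Sig (fun α => (∑ j, W α j * X j i) + B α) u
        = (y i / ∑ k, w k * w k) • w := fun i => hsub _ _
  choose u hu using hu
  have hV : ∀ α : Fin M, ∃ v : Fin M → ℝ, (Xᵀ).mulVecLin v = fun i => u i α :=
    fun α => hXs _
  choose V hV using hV
  have hV2 : ∀ α i, ∑ j, V α j * X j i = u i α := by
    intro α i
    have := congrFun (hV α) i
    simp only [Matrix.mulVecLin_apply, Matrix.mulVec, dotProduct, Matrix.transpose_apply] at this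
    rw [← this]
    exact Finset.sum_congr rfl fun j _ => mul_comm _ _
  refine ⟨(0, V, 0), ?_⟩
  set F := (fun p : (Fin M → ℝ) × (Fin M → Fin M → ℝ) × (Fin M → ℝ) =>
            fun i : Fin N =>
              ∑ k, p.1 k * Sig (fun α => (∑ j, p.2.1 α j * X j i) + p.2.2 α) k) with hF
  have hFd : DifferentiableAt ℝ F (w, W, B) := by
    rw [hF, differentiableAt_pi]
    intro i
    have hin : Differentiable ℝ
        (fun p : (Fin M → ℝ) × (Fin M → Fin M → ℝ) × (Fin M → ℝ) =>
          (fun α => (∑ j, p.2.1 α j * X j i) + p.2.2 α : Fin M → ℝ)) := by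
      fun_prop
    have hc := hS.comp hin
    have hck : ∀ k, Differentiable ℝ
        (fun p : (Fin M → ℝ) × (Fin M → Fin M → ℝ) × (Fin M → ℝ) =>
          Sig (fun α => (∑ j, p.2.1 α j * X j i) + p.2.2 α) k) :=
      fun k => differentiable_pi.mp hc k
    have : Differentiable ℝ
        (fun p : (Fin M → ℝ) × (Fin M → Fin M → ℝ) × (Fin M → ℝ) =>
          ∑ k, p.1 k * Sig (fun α => (∑ j, p.2.1 α j * X j i) + p.2.2 α) k) := by
      fun_prop
    exact this _
  have h1 := hFd.hasFDerivAt.hasLineDerivAt (0, V, 0)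
  refine HasLineDerivAt.unique h1 ?_
  unfold HasLineDerivAt
  rw [hasDerivAt_pi]
  intro i
  have hline := (hS (fun α => (∑ j, W α j * X j i) + B α)).hasFDerivAt.hasLineDerivAt (u i)
  rw [hu i] at hline
  unfold HasLineDerivAt at hline
  rw [hasDerivAt_pi] at hline
  have hsum := HasDerivAt.fun_sum (u := Finset.univ)
    (fun k _ => (hline k).const_mul (w k))
  convert hsum using 1
  · funext t
    simp only [hF, Prod.smul_mk, Prod.mk_add_mk, smul_zero, add_zero]
    refine Finset.sum_congr rfl fun k _ => ?_
    congr 2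
    funext α
    simp only [Pi.add_apply, Pi.smul_apply, smul_eq_mul, add_mul, Finset.sum_add_distrib,
      ← hV2 α i, Finset.mul_sum, mul_assoc]
    ring
  · simp only [Pi.smul_apply, smul_eq_mul]
    have : ∀ k, w k * (y i / (∑ k, w k * w k) * w k)
        = (y i / ∑ k, w k * w k) * (w k * w k) := fun k => by ring
    simp only [this, ← Finset.mul_sum]
    exact (div_mul_cancel₀ _ hww).symm
end
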